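/- Let μ satisfy Assumption 1. Then there exists a finite Borel measure μ̂ on ℝ such that F_μ(ω) − ω = −∫_ℝ x dμ(x) + ∫_ℝ 1/(x−ω) dμ̂(x) for all ω ∈ ℂ⁺. Moreover 0 < μ̂(ℝ) = ∫_ℝ x² dμ(x) − (∫_ℝ x dμ(x))² < ∞ (the variance of μ), and supp(μ̂) = supp(μ_ac) ∪ {y_1,…,y_j}, where {y_1,…,y_j} is a finite set of at most n_ac + n_pp^out − 1 real points, each of which is a zero of m_μ lying outside supp(μ_ac); each such y_i is an atom of μ̂. -/

import Mathlib

open MeasureTheory Topology Filter Set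

noncomputable section

/-- The open upper half-plane ℂ⁺. -/
def UHP : Set ℂ := {z : ℂ | 0 < z.im}

/-- The closed upper half-plane ℂ⁺ ∪ ℝ. -/
def CUHP : Set ℂ := {z : ℂ | 0 ≤ z.im}

/-- Cauchy–Stieltjes transform `m_μ(z) = ∫ 1/(x−z) dμ(x)`. -/
def stT (μ : Measure ℝ) (z : ℂ) : ℂ := ∫ x, ((x : ℂ) - z)⁻¹ ∂μ

/-- Real-valued Cauchy–Stieltjes transform at real points (outside the support). -/
def stTR (μ : Measure ℝ) (E : ℝ) : ℝ := ∫ x, (x - E)⁻¹ ∂μ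

/-- Negative reciprocal Cauchy–Stieltjes transform `F_μ = −1/m_μ`. -/
def nrT (μ : Measure ℝ) (z : ℂ) : ℂ := -(stT μ z)⁻¹

/-- Support of a Borel measure on ℝ (the smallest closed set of full measure). -/
def msupp (μ : Measure ℝ) : Set ℝ := {x : ℝ | ∀ ε > 0, 0 < μ (Set.Ioo (x - ε) (x + ε))}

/-- Absolutely continuous part of μ with respect to Lebesgue measure. -/
def acPart (μ : Measure ℝ) : Measure ℝ := volume.withDensity (μ.rnDeriv volume)

/-- `I_μ(ω) = ∫ 1/|x−ω|² dμ(x)`. -/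
def Ifun (μ : Measure ℝ) (w : ℂ) : ℝ := ∫ x, (Complex.normSq ((x : ℂ) - w))⁻¹ ∂μ

/-- A sequence of the upper half-plane converging non-tangentially to `E ∈ ℝ`. -/
def NonTangentialSeq (z : ℕ → ℂ) (E : ℝ) : Prop :=
  (∀ n, z n ∈ UHP) ∧ Tendsto z atTop (𝓝 (E : ℂ)) ∧
    ∃ C : ℝ, ∀ n, |(z n).re - E| ≤ C * (z n).im

/-- The density `ρ_μ` of the a.c. part of `μ` vanishes at `x`
(via the Stieltjes inversion formula). -/
def densityVanishesAt (μ : Measure ℝ) (x : ℝ) : Prop :=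
  Tendsto (fun η : ℝ => (stT μ ((x : ℂ) + (η : ℂ) * Complex.I)).im) (𝓝[>] 0) (𝓝 0)

/-- The density `ρ_μ` of the a.c. part of `μ` diverges at `x`. -/
def densityDivergesAt (μ : Measure ℝ) (x : ℝ) : Prop :=
  Tendsto (fun η : ℝ => (stT μ ((x : ℂ) + (η : ℂ) * Complex.I)).im) (𝓝[>] 0) atTop

/-- Assumption 1. -/
structure Assumption1 (μ : Measure ℝ) (nac npp nppout : ℕ)
    (Em Ep : Fin nac → ℝ) (atom : Fin npp → ℝ) (ρ : ℝ → ℝ) : Prop where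
  prob : IsProbabilityMeasure μ
  compact : IsCompact (msupp μ)
  nac_pos : 1 ≤ nac
  npp_pos : 1 ≤ npp
  ρ_nonneg : ∀ x, 0 ≤ ρ x
  ac_density : acPart μ = volume.withDensity fun x => ENNReal.ofReal (ρ x)
  sing_atomic : μ.singularPart volume = ∑ j : Fin npp, μ {atom j} • Measure.dirac (atom j)
  atom_inj : Function.Injective atom
  atom_pos : ∀ j, 0 < μ {atom j}
  lt : ∀ j, Em j < Ep j
  ordered : ∀ i j : Fin nac, i < j → Ep i < Em j
  supp_ac : msupp (acPart μ) = ⋃ j, Set.Icc (Em j) (Ep j)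
  out_card : Nat.card {j : Fin npp // atom j ∉ msupp (acPart μ)} = nppout
  no_atom_endpoint : ∀ j i, atom j ≠ Em i ∧ atom j ≠ Ep i
  power_law : ∀ j, ∃ tm tp C : ℝ, -1 < tm ∧ tm < 1 ∧ -1 < tp ∧ tp < 1 ∧ 1 ≤ C ∧
    ∀ᵐ x ∂volume, x ∈ Set.Icc (Em j) (Ep j) →
      C⁻¹ < ρ x / ((x - Em j) ^ tm * (Ep j - x) ^ tp) ∧
      ρ x / ((x - Em j) ^ tm * (Ep j - x) ^ tp) < C

/-- The subordination function `ω_t` for the free convolution semi-group,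
together with its continuous extension to `ℂ⁺ ∪ ℝ`. -/
structure IsSubordT (μ : Measure ℝ) (t : ℝ) (ω : ℂ → ℂ) : Prop where
  diff : DifferentiableOn ℂ ω UHP
  maps : ∀ z ∈ UHP, ω z ∈ UHP
  imLe : ∀ z ∈ UHP, z.im ≤ (ω z).im
  limTop : Tendsto (fun η : ℝ => ω ((η : ℂ) * Complex.I) / ((η : ℂ) * Complex.I))
      atTop (𝓝 1)
  eqn : ∀ z ∈ UHP, (t : ℂ) * ω z - z = ((t : ℂ) - 1) * nrT μ (ω z)
  cont : ContinuousOn ω CUHP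

/-- `μt = μ^{⊞ t}`: the probability measure whose negative reciprocal Cauchy–Stieltjes
transform is `F_μ ∘ ω_t`, i.e. whose Cauchy–Stieltjes transform is `m_μ ∘ ω_t`. -/
def IsFreePow (μ : Measure ℝ) (ω : ℂ → ℂ) (μt : Measure ℝ) : Prop :=
  IsProbabilityMeasure μt ∧ ∀ z ∈ UHP, stT μt z = stT μ (ω z)

/-- Assumption 2 (for one of the two measures). -/
structure Assumption2 (μ : Measure ℝ) (n : ℕ) (Am Ap : Fin n → ℝ) (ρ : ℝ → ℝ) : Prop where
  prob : IsProbabilityMeasure μ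
  n_pos : 1 ≤ n
  centered : ∫ x, x ∂μ = 0
  ρ_nonneg : ∀ x, 0 ≤ ρ x
  ac : μ = volume.withDensity fun x => ENNReal.ofReal (ρ x)
  lt : ∀ j, Am j < Ap j
  ordered : ∀ i j : Fin n, i < j → Ap i < Am j
  supp_eq : msupp μ = ⋃ j, Set.Icc (Am j) (Ap j)
  power_law : ∀ j, ∃ sm sp C : ℝ, -1 < sm ∧ sm < 1 ∧ -1 < sp ∧ sp < 1 ∧ 1 ≤ C ∧
    ∀ᵐ x ∂volume, x ∈ Set.Icc (Am j) (Ap j) →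
      C⁻¹ < ρ x / ((x - Am j) ^ sm * (Ap j - x) ^ sp) ∧
      ρ x / ((x - Am j) ^ sm * (Ap j - x) ^ sp) < C

/-- The pair of subordination functions for the free additive convolution `μa ⊞ μb`. -/
structure IsSubordPair (μa μb : Measure ℝ) (ωa ωb : ℂ → ℂ) : Prop where
  diff_a : DifferentiableOn ℂ ωa UHP
  diff_b : DifferentiableOn ℂ ωb UHP
  maps_a : ∀ z ∈ UHP, ωa z ∈ UHP
  maps_b : ∀ z ∈ UHP, ωb z ∈ UHP
  imLe_a : ∀ z ∈ UHP, z.im ≤ (ωa z).im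
  imLe_b : ∀ z ∈ UHP, z.im ≤ (ωb z).im
  lim_a : Tendsto (fun η : ℝ => ωa ((η : ℂ) * Complex.I) / ((η : ℂ) * Complex.I))
      atTop (𝓝 1)
  lim_b : Tendsto (fun η : ℝ => ωb ((η : ℂ) * Complex.I) / ((η : ℂ) * Complex.I))
      atTop (𝓝 1)
  eqn_a : ∀ z ∈ UHP, ωa z + ωb z - z = nrT μa (ωb z)
  eqn_b : ∀ z ∈ UHP, ωa z + ωb z - z = nrT μb (ωa z)

/-- `μab = μa ⊞ μb`: the probability measure whose negative reciprocal Cauchy–Stieltjes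
transform is `F_{μa} ∘ ω_b`, i.e. whose Cauchy–Stieltjes transform is `m_{μa} ∘ ω_b`. -/
def IsFreeConv (μa μb : Measure ℝ) (ωb : ℂ → ℂ) (μab : Measure ℝ) : Prop :=
  IsProbabilityMeasure μab ∧ ∀ z ∈ UHP, stT μab z = stT μa (ωb z)

/-- `Ω` is the continuous extension of `ω` to `ℂ⁺ ∪ ℝ`, with values in the
Riemann sphere `ℂ ∪ {∞}`. -/
def ExtendsToRP (ω : ℂ → ℂ) (Ω : ℂ → OnePoint ℂ) : Prop :=
  ContinuousOn Ω CUHP ∧ ∀ z ∈ UHP, Ω z = (ω z : OnePoint ℂ)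

/-- `μhat` is the measure in the Nevanlinna representation
`F_μ(ω) − ω = −∫ x dμ + ∫ 1/(x−ω) dμ̂(x)`. -/
def IsNevanHat (μ μhat : Measure ℝ) : Prop :=
  IsFiniteMeasure μhat ∧ ∀ z ∈ UHP,
    nrT μ z - z = -((∫ x, x ∂μ : ℝ) : ℂ) + ∫ x, ((x : ℂ) - z)⁻¹ ∂μhat

end

/-!
Let `X` be multiplication by `x` on `L²(μ)` and `m` the mean of `μ`. Splitting `L²(μ)` into the
constants and their orthogonal complement `U`, the Schur complement formula gives
`⟪1, (X - z)⁻¹ 1⟫⁻¹ = m - z - ⟪w, (A - z)⁻¹ w⟫`, where `A` is the compression of `X` to `U` and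
`w = x - m`. The left side is `(stT μ z)⁻¹`, so the spectral measure of `A` at `w` is `μ̂`, and its
mass is `‖w‖²`, the variance of `μ`.

A measure is null on any set where the imaginary part of its transform has vertical limit zero, so
supports can be read off from boundary values of `(stT μ z)⁻¹ = m - z - stT μ̂ z`: off the support
of `μ_ac` the measure `μ̂` only sees the zeros of `stT μ`, and conversely where `μ̂` is null, `μ`
can only have an atom at the zero of the strictly monotone function `x + stTR μ̂ x - m`. Finally
`stTR μ` is strictly increasing on the gaps of the support of `μ` and has a constant sign on either
side of it, so its zeros are separated by the components of the support.
-/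

theorem ofReal_sub_ne_zero {z : ℂ} (hz : 0 < z.im) (x : ℝ) : (x : ℂ) - z ≠ 0 := fun h => by
  simpa [hz.ne'] using congrArg Complex.im h

theorem norm_inv_ofReal_sub_le {z : ℂ} (hz : 0 < z.im) (x : ℝ) : ‖((x : ℂ) - z)⁻¹‖ ≤ z.im⁻¹ := by
  rw [norm_inv]
  have := Complex.abs_im_le_norm ((x : ℂ) - z)
  exact inv_anti₀ hz (by simpa [abs_of_pos hz] using this)

theorem integrable_inv_ofReal_sub (ν : Measure ℝ) [IsFiniteMeasure ν] {z : ℂ} (hz : 0 < z.im) :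
    Integrable (fun x : ℝ => ((x : ℂ) - z)⁻¹) ν :=
  .of_bound (Measurable.aestronglyMeasurable (by fun_prop)) z.im⁻¹
    (ae_of_all _ (norm_inv_ofReal_sub_le hz))

/-! ### Spectral measures -/

section
open scoped CompactlySupported ComplexOrder

theorem exists_measure_forall_eq_integral {K : Type*} [TopologicalSpace K] [CompactSpace K]
    [T2Space K] [MeasurableSpace K] [BorelSpace K] (Λ : C(K, ℝ) →ₚ[ℝ] ℝ) :
    ∃ ν : Measure K, IsFiniteMeasure ν ∧ ∀ f : C(K, ℝ), Λ f = ∫ x, f x ∂ν := by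
  let Λc : C_c(K, ℝ) →ₚ[ℝ] ℝ := .mk₀
    { toFun f := Λ f
      map_add' f g := map_add Λ (f : C(K, ℝ)) g
      map_smul' c f := map_smul Λ c (f : C(K, ℝ)) }
    fun f hf => Λ.map_nonneg (show (0 : C(K, ℝ)) ≤ f from hf)
  exact ⟨RealRMK.rieszMeasure Λc, inferInstance, fun f =>
    (RealRMK.integral_rieszMeasure Λc (CompactlySupportedContinuousMap.continuousMapEquiv f)).symm⟩

variable {A : Type*} [CStarAlgebra A] [PartialOrder A] {a : A}
  {φ : A →ₚ[ℂ] ℂ} {ν : Measure ℝ}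

/-- `ν` is the spectral measure of the self-adjoint element `a` with respect to the positive
functional `φ`. It is taken on `ℝ` rather than on the spectrum of `a`, so that it can be compared
with other measures on the line. -/
structure IsSpectralMeasure (φ : A →ₚ[ℂ] ℂ) (a : A) (ν : Measure ℝ) : Prop where
  isFiniteMeasure : IsFiniteMeasure ν
  map_cfc : ∀ f : ℝ → ℝ, Continuous f → φ (cfc f a) = ((∫ x, f x ∂ν : ℝ) : ℂ)

theorem exists_isSpectralMeasure [StarOrderedRing A] (φ : A →ₚ[ℂ] ℂ) (ha : IsSelfAdjoint a) :
    ∃ ν : Measure ℝ, IsSpectralMeasure φ a ν := by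
  let Λ : C(spectrum ℝ a, ℝ) →ₚ[ℝ] ℝ := .mk₀
    (Complex.reLm ∘ₗ φ.toLinearMap.restrictScalars ℝ ∘ₗ (cfcHom ha).toAlgHom.toLinearMap)
    fun f hf => (Complex.le_def.mp (φ.map_nonneg ((cfcHom_nonneg_iff ha).mpr hf))).1
  obtain ⟨ν, hfin, hν⟩ := exists_measure_forall_eq_integral Λ
  refine ⟨ν.map Subtype.val, inferInstance, fun f hf => ?_⟩
  have hreal : IsSelfAdjoint (φ (cfc f a)) := (cfc_predicate f a).map φ
  rw [integral_map measurable_subtype_coe.aemeasurable hf.aestronglyMeasurable,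
    ← Complex.conj_eq_iff_re.mp hreal, cfc_apply f a]
  exact congrArg _ (hν ⟨_, hf.continuousOn.domRestrict⟩)

namespace IsSpectralMeasure

theorem map_one (h : IsSpectralMeasure φ a ν) (ha : IsSelfAdjoint a) : φ 1 = ν.real univ := by
  simpa [cfc_const_one ℝ a] using h.map_cfc (fun _ => 1) continuous_const

theorem map_cfc_complex (h : IsSpectralMeasure φ a ν) (ha : IsSelfAdjoint a) {f : ℝ → ℂ}
    (hf : Continuous f) (hint : Integrable f ν) :
    φ (cfc (fun w : ℂ => f w.re) a) = ∫ x, f x ∂ν := by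
  have hre : Continuous fun x => (f x).re := Complex.continuous_re.comp hf
  have him : Continuous fun x => (f x).im := Complex.continuous_im.comp hf
  have hsplit : cfc (fun w : ℂ => f w.re) a =
      cfc (fun x => (f x).re) a + Complex.I • cfc (fun x => (f x).im) a := by
    rw [cfc_real_eq_complex _ ha, cfc_real_eq_complex _ ha, ← cfc_const_mul .., ← cfc_add ..]
    simp only [mul_comm Complex.I, Complex.re_add_im]
  rw [hsplit, map_add, map_smul, h.map_cfc _ hre, h.map_cfc _ him, ← integral_re_add_im hint]
  simp [mul_comm]

theorem map_resolvent (h : IsSpectralMeasure φ a ν) (ha : IsSelfAdjoint a) {z : ℂ}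
    (hz : 0 < z.im) : φ (resolvent a z) = -stT ν z := by
  have := h.isFiniteMeasure
  have hcont : Continuous fun x : ℝ => -((x : ℂ) - z)⁻¹ :=
    ((by fun_prop : Continuous fun x : ℝ => (x : ℂ) - z).inv₀ (ofReal_sub_ne_zero hz)).neg
  have hne (w : ℂ) : z - w.re ≠ 0 := sub_ne_zero.mpr (sub_ne_zero.mp (ofReal_sub_ne_zero hz _)).symm
  have hre : ∀ w ∈ spectrum ℂ a, z - w.re = z - w := fun w hw => by
    rw [← ha.mem_spectrum_eq_re hw]
  have hres : resolvent a z = cfc (fun w : ℂ => -((w.re : ℂ) - z)⁻¹) a := by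
    simp_rw [← inv_neg, neg_sub]
    rw [cfc_inv (fun w : ℂ => z - w.re) a fun w _ => hne w, cfc_congr hre, cfc_sub .., cfc_id' ..,
      cfc_const ..]
    rfl
  rw [hres, h.map_cfc_complex ha hcont (integrable_inv_ofReal_sub ν hz).neg, integral_neg]
  rfl

end IsSpectralMeasure

end

/-! ### Compressions and the Schur complement -/

theorem mem_resolventSet_of_isSelfAdjoint {A : Type*} [CStarAlgebra A] {a : A}
    (ha : IsSelfAdjoint a) {z : ℂ} (hz : z.im ≠ 0) : z ∈ resolventSet ℂ a := by
  by_contra h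
  exact hz (ha.im_eq_zero_of_mem_spectrum h)

section
open scoped ComplexOrder InnerProductSpace
variable {H : Type*} [NormedAddCommGroup H] [InnerProductSpace ℂ H]

theorem resolvent_apply_eq_iff {T : H →L[ℂ] H} {z : ℂ} (hz : z ∈ resolventSet ℂ T) {v g : H} :
    resolvent T z v = g ↔ z • g - T g = v := by
  let R := algebraMap ℂ (H →L[ℂ] H) z - T
  have hR (h : H) : R h = z • h - T h := rfl
  have hleft : resolvent T z * R = 1 := Ring.inverse_mul_cancel R hz
  have hright : R * resolvent T z = 1 := Ring.mul_inverse_cancel R hz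
  rw [← hR]
  constructor
  · rintro rfl
    exact congr($hright v)
  · rintro rfl
    exact congr($hleft g)

/-- The compression of `T` to the subspace `U`, extended by zero to an operator on the whole space,
so that its resolvent lives in the same algebra as that of `T`. -/
noncomputable def compression (U : Submodule ℂ H) [U.HasOrthogonalProjection] (T : H →L[ℂ] H) :
    H →L[ℂ] H :=
  U.starProjection ∘L T ∘L U.starProjection

theorem compression_apply_of_mem {U : Submodule ℂ H} [U.HasOrthogonalProjection] (T : H →L[ℂ] H)
    {x : H} (hx : x ∈ U) : compression U T x = U.starProjection (T x) := by
  simp [compression, U.starProjection_eq_self_iff.mpr hx]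

theorem resolvent_compression_apply_mem {U : Submodule ℂ H} [U.HasOrthogonalProjection]
    (T : H →L[ℂ] H) {z : ℂ} (hz : z ≠ 0) (hzT : z ∈ resolventSet ℂ (compression U T)) {v : H}
    (hv : v ∈ U) : resolvent (compression U T) z v ∈ U := by
  have hg := (resolvent_apply_eq_iff hzT).mp (rfl : resolvent (compression U T) z v = _)
  rw [← U.smul_mem_iff hz, eq_add_of_sub_eq hg]
  exact U.add_mem hv (U.starProjection_apply_mem _)

variable [CompleteSpace H]

theorem schur_complement_mul_inner_resolvent {X : H →L[ℂ] H} (hX : IsSelfAdjoint X) {e : H}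
    (he : ‖e‖ = 1) {z : ℂ} (hz : z ≠ 0) (hzX : z ∈ resolventSet ℂ X)
    (hzA : z ∈ resolventSet ℂ (compression (ℂ ∙ e)ᗮ X)) {w : H} (hw : X e - ⟪e, X e⟫_ℂ • e = w) :
    (z - ⟪e, X e⟫_ℂ - ⟪w, resolvent (compression (ℂ ∙ e)ᗮ X) z w⟫_ℂ) *
      ⟪e, resolvent X z e⟫_ℂ = 1 := by
  have hproj (x : H) : (ℂ ∙ e)ᗮ.starProjection x = x - ⟪e, x⟫_ℂ • e := by
    rw [Submodule.starProjection_orthogonal_val, Submodule.starProjection_unit_singleton ℂ he]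
  have hwU : w ∈ (ℂ ∙ e)ᗮ := hw ▸ hproj (X e) ▸ Submodule.starProjection_apply_mem _ _
  set g := resolvent (compression (ℂ ∙ e)ᗮ X) z w
  have hgU : g ∈ (ℂ ∙ e)ᗮ := resolvent_compression_apply_mem X hz hzA hwU
  have heg : ⟪e, g⟫_ℂ = 0 := Submodule.mem_orthogonal_singleton_iff_inner_right.mp hgU
  have hXg : z • g - (X g - ⟪e, X g⟫_ℂ • e) = w := by
    rw [← hproj, ← compression_apply_of_mem X hgU]
    exact (resolvent_apply_eq_iff hzA).mp rfl
  have hwg : ⟪w, g⟫_ℂ = ⟪e, X g⟫_ℂ := by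
    rw [← hw, inner_sub_left, inner_smul_left, heg, mul_zero, sub_zero,
      ← ContinuousLinearMap.adjoint_inner_right, hX.adjoint_eq]
  have hc : z • (e + g) - X (e + g) = (z - ⟪e, X e⟫_ℂ - ⟪w, g⟫_ℂ) • e := by
    rw [hwg, map_add, smul_add, eq_add_of_sub_eq hXg, ← hw]
    module
  have hsolve := congr(⟪e, $((resolvent_apply_eq_iff hzX).mpr hc)⟫_ℂ)
  rwa [map_smul, inner_smul_right, inner_add_right, heg, add_zero, inner_self_eq_norm_sq_to_K, he,
    RCLike.ofReal_one, one_pow] at hsolve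

/-- The positive functional `T ↦ ⟪v, T v⟫` on bounded operators, the vector state of `v` up to
normalization; it turns spectral measures of functionals into those of vectors. -/
noncomputable def vectorFunctional (v : H) : (H →L[ℂ] H) →ₚ[ℂ] ℂ :=
  .mk₀ (innerSL ℂ v ∘L ContinuousLinearMap.apply ℂ H v).toLinearMap fun T hT =>
    ((ContinuousLinearMap.nonneg_iff_isPositive T).mp hT).inner_nonneg_right v

theorem vectorFunctional_apply (v : H) (T : H →L[ℂ] H) :
    vectorFunctional v T = ⟪v, T v⟫_ℂ :=
  rfl

theorem exists_measure_schur_complement {X : H →L[ℂ] H} (hX : IsSelfAdjoint X) {e : H}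
    (he : ‖e‖ = 1) :
    ∃ ν : Measure ℝ, IsFiniteMeasure ν ∧ ν.real univ = ‖X e - ⟪e, X e⟫_ℂ • e‖ ^ 2 ∧
      ∀ z : ℂ, 0 < z.im → (z - ⟪e, X e⟫_ℂ + stT ν z) * ⟪e, resolvent X z e⟫_ℂ = 1 := by
  have hA : IsSelfAdjoint (compression (ℂ ∙ e)ᗮ X) := hX.conj_starProjection _
  obtain ⟨ν, hν⟩ := exists_isSpectralMeasure (vectorFunctional (X e - ⟪e, X e⟫_ℂ • e)) hA
  refine ⟨ν, hν.isFiniteMeasure, ?_, fun z hz => ?_⟩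
  · have hmass := hν.map_one hA
    rw [vectorFunctional_apply, one_apply_eq_self, inner_self_eq_norm_sq_to_K] at hmass
    exact Complex.ofReal_injective (by simpa using hmass.symm)
  · have hschur := schur_complement_mul_inner_resolvent hX he (by rintro rfl; simp at hz)
      (mem_resolventSet_of_isSelfAdjoint hX hz.ne')
      (mem_resolventSet_of_isSelfAdjoint hA hz.ne') rfl
    rwa [← vectorFunctional_apply (X e - _), hν.map_resolvent hA hz, sub_neg_eq_add] at hschur

end

/-! ### Multiplication operators on `L²` -/

section
open ProbabilityTheory
open scoped InnerProductSpace

variable {α : Type*} [MeasurableSpace α] {μ : Measure α}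

/-- The operator of multiplication by the essentially bounded function `f` on `L²(μ)`. -/
noncomputable def mulOperator (f : Lp ℂ ⊤ μ) : Lp ℂ 2 μ →L[ℂ] Lp ℂ 2 μ :=
  (ContinuousLinearMap.mul ℂ ℂ).holderL μ ⊤ 2 2 f

theorem coeFn_mulOperator (f : Lp ℂ ⊤ μ) (g : Lp ℂ 2 μ) :
    mulOperator f g =ᵐ[μ] fun x => f x * g x :=
  (ContinuousLinearMap.mul ℂ ℂ).coeFn_holder f g

theorem isSelfAdjoint_mulOperator {f : Lp ℂ ⊤ μ} (hf : ∀ᵐ x ∂μ, (f x).im = 0) :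
    IsSelfAdjoint (mulOperator f) := by
  refine ContinuousLinearMap.isSelfAdjoint_iff_isSymmetric.mpr fun g h => ?_
  simp only [ContinuousLinearMap.coe_coe, L2.inner_def]
  refine integral_congr_ae ?_
  filter_upwards [hf, coeFn_mulOperator f g, coeFn_mulOperator f h] with x hx hg hh
  rw [hg, hh, RCLike.inner_apply, RCLike.inner_apply, map_mul, Complex.conj_eq_iff_im.mpr hx]
  ring

theorem coeFn_resolvent_mulOperator {f : Lp ℂ ⊤ μ} {z : ℂ}
    (hz : z ∈ resolventSet ℂ (mulOperator f)) (hne : ∀ᵐ x ∂μ, f x ≠ z) (g : Lp ℂ 2 μ) :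
    resolvent (mulOperator f) z g =ᵐ[μ] fun x => (z - f x)⁻¹ * g x := by
  set h := resolvent (mulOperator f) z g
  have heq : z • h - mulOperator f h = g := (resolvent_apply_eq_iff hz).mp rfl
  filter_upwards [hne, Lp.coeFn_sub (z • h) (mulOperator f h), Lp.coeFn_smul z h,
    coeFn_mulOperator f h] with x hx hsub hsmul hmul
  rw [heq, Pi.sub_apply, hsmul, hmul, Pi.smul_apply, smul_eq_mul, ← sub_mul] at hsub
  rw [hsub, inv_mul_cancel_left₀ (sub_ne_zero.mpr hx.symm)]

theorem norm_sq_eq_integral_norm_sq (f : Lp ℂ 2 μ) : ‖f‖ ^ 2 = ∫ x, ‖f x‖ ^ 2 ∂μ := by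
  have h : ((‖f‖ ^ 2 : ℝ) : ℂ) = ∫ x, ((‖f x‖ ^ 2 : ℝ) : ℂ) ∂μ := by
    simpa [inner_self_eq_norm_sq_to_K] using L2.inner_def (𝕜 := ℂ) f f
  rw [integral_complex_ofReal] at h
  exact Complex.ofReal_injective h

theorem norm_sub_smul_const_sq_eq_variance [IsProbabilityMeasure μ] {X : α → ℝ}
    (hX : AEMeasurable X μ) {f : Lp ℂ 2 μ} (hf : f =ᵐ[μ] fun x => (X x : ℂ)) :
    ‖f - ((∫ x, X x ∂μ : ℝ) : ℂ) • Lp.const 2 μ (1 : ℂ)‖ ^ 2 = Var[X; μ] := by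
  rw [norm_sq_eq_integral_norm_sq, variance_eq_integral hX]
  refine integral_congr_ae ?_
  set m := ∫ x, X x ∂μ
  filter_upwards [hf, Lp.coeFn_sub f ((m : ℂ) • Lp.const 2 μ (1 : ℂ)),
    Lp.coeFn_smul (m : ℂ) (Lp.const 2 μ (1 : ℂ)), Lp.coeFn_const 2 μ (1 : ℂ)]
    with x hx hsub hsmul hone
  rw [hsub, Pi.sub_apply, hsmul, Pi.smul_apply, hone, hx, Function.const_apply, smul_eq_mul,
    mul_one, ← Complex.ofReal_sub, Complex.norm_real, Real.norm_eq_abs, sq_abs]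

theorem inner_const_one_left [IsFiniteMeasure μ] (f : Lp ℂ 2 μ) :
    ⟪Lp.const 2 μ (1 : ℂ), f⟫_ℂ = ∫ x, f x ∂μ := by
  rw [L2.inner_def]
  refine integral_congr_ae ?_
  filter_upwards [Lp.coeFn_const 2 μ (1 : ℂ)] with x hx
  rw [hx]
  simp [RCLike.inner_apply]

end

theorem exists_isNevanHat {μ : Measure ℝ} [IsProbabilityMeasure μ] {R : ℝ}
    (hR : ∀ᵐ x ∂μ, |x| ≤ R) :
    ∃ ν : Measure ℝ, IsNevanHat μ ν ∧ ν.real univ = ProbabilityTheory.variance id μ := by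
  have hmem : MemLp (fun x : ℝ => (x : ℂ)) ⊤ μ :=
    memLp_top_of_bound (Measurable.aestronglyMeasurable (by fun_prop)) R (by simpa using hR)
  set X := mulOperator (hmem.toLp _)
  set e := Lp.const 2 μ (1 : ℂ)
  have he : ‖e‖ = 1 := by simp [e, Lp.norm_const]
  have he1 : e =ᵐ[μ] fun _ => 1 := Lp.coeFn_const 2 μ 1
  have hX : IsSelfAdjoint X := isSelfAdjoint_mulOperator <| by
    filter_upwards [hmem.coeFn_toLp] with x hx
    rw [hx, Complex.ofReal_im]
  have hXe : X e =ᵐ[μ] fun x => (x : ℂ) := by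
    filter_upwards [coeFn_mulOperator (hmem.toLp _) e, hmem.coeFn_toLp, he1] with x hmul hx he
    rw [hmul, hx, he, mul_one]
  have hmean : inner ℂ e (X e) = ((∫ x, x ∂μ : ℝ) : ℂ) := by
    rw [inner_const_one_left, integral_congr_ae hXe, integral_complex_ofReal]
  have hres {z : ℂ} (hz : 0 < z.im) : inner ℂ e (resolvent X z e) = -stT μ z := by
    rw [inner_const_one_left, stT, ← integral_neg]
    have hne : ∀ᵐ x ∂μ, hmem.toLp _ x ≠ z := by
      filter_upwards [hmem.coeFn_toLp] with x hx
      exact hx ▸ sub_ne_zero.mp (ofReal_sub_ne_zero hz x)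
    refine integral_congr_ae ?_
    filter_upwards [coeFn_resolvent_mulOperator (mem_resolventSet_of_isSelfAdjoint hX hz.ne') hne e,
      hmem.coeFn_toLp, he1] with x hR hx he
    rw [hR, hx, he, mul_one, ← inv_neg, neg_sub]
  obtain ⟨ν, hfin, hmass, hν⟩ := exists_measure_schur_complement hX he
  rw [hmean] at hmass
  refine ⟨ν, ⟨hfin, fun z hz => ?_⟩, hmass.trans
    (norm_sub_smul_const_sq_eq_variance aemeasurable_id hXe)⟩
  specialize hν z hz
  rw [hmean, hres hz, mul_neg, ← neg_mul] at hν
  rw [nrT, ← eq_inv_of_mul_eq_one_left hν]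
  change -(-(z - _ + stT ν z)) - z = _ + stT ν z
  ring

/-! ### Boundary values of the Cauchy–Stieltjes transform -/

theorem mem_UHP_ofReal_add_mul_I {E η : ℝ} (hη : 0 < η) : (E : ℂ) + η * Complex.I ∈ UHP := by
  simpa [UHP] using hη

theorem tendsto_ofReal_nhdsGT_zero : Tendsto Complex.ofReal (𝓝[>] 0) (𝓝 0) :=
  (Complex.continuous_ofReal.tendsto' 0 0 Complex.ofReal_zero).mono_left nhdsWithin_le_nhds

theorem tendsto_ofReal_add_mul_I (E : ℝ) :
    Tendsto (fun η : ℝ => (E : ℂ) + η * Complex.I) (𝓝[>] 0) (𝓝 E) :=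
  (Continuous.tendsto' (by fun_prop) _ _ (by simp)).mono_left nhdsWithin_le_nhds

section
variable {ν : Measure ℝ} [IsFiniteMeasure ν] {E : ℝ}

theorem integrable_normSq_inv {z : ℂ} (hz : 0 < z.im) :
    Integrable (fun x : ℝ => (Complex.normSq (x - z))⁻¹) ν := by
  refine .of_bound (Measurable.aestronglyMeasurable (by fun_prop)) (z.im⁻¹ ^ 2) ?_
  refine ae_of_all _ fun x => ?_
  rw [← map_inv₀, Complex.normSq_eq_norm_sq, norm_pow, norm_norm]
  gcongr
  exact norm_inv_ofReal_sub_le hz x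

theorem im_stT {z : ℂ} (hz : 0 < z.im) : (stT ν z).im = z.im * Ifun ν z := by
  rw [Ifun, ← integral_const_mul]
  refine (integral_im (integrable_inv_ofReal_sub ν hz)).symm.trans (integral_congr_ae ?_)
  refine ae_of_all _ fun x => ?_
  simp [div_eq_mul_inv]

theorem measureReal_closedBall_le {η : ℝ} (hη : 0 < η) :
    ν.real (Metric.closedBall E η) ≤ 2 * η * (stT ν (E + η * Complex.I)).im := by
  set z : ℂ := E + η * Complex.I
  have hz : z.im = η := by simp [z]
  have hsub : Metric.closedBall E η ⊆ {x : ℝ | (2 * η ^ 2)⁻¹ ≤ (Complex.normSq (x - z))⁻¹} := by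
    intro x hx
    replace hx : |x - E| ≤ η := by simpa [Real.dist_eq] using hx
    have hsq : (x - E) ^ 2 ≤ η ^ 2 := sq_le_sq' (by grind [abs_le.mp hx]) (abs_le.mp hx).2
    have hnorm : Complex.normSq (x - z) = (x - E) ^ 2 + η ^ 2 := by
      simp [Complex.normSq_apply, z, sq]
    rw [mem_ofPred_eq, hnorm]
    exact inv_anti₀ (by positivity) (by linarith)
  have hmarkov : (2 * η ^ 2)⁻¹ * ν.real (Metric.closedBall E η) ≤ Ifun ν z :=
    (mul_le_mul_of_nonneg_left (measureReal_mono hsub) (by positivity)).trans <|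
      mul_meas_ge_le_integral_of_nonneg
        (ae_of_all _ fun x => inv_nonneg.mpr (Complex.normSq_nonneg _))
        (integrable_normSq_inv (hz ▸ hη)) _
  rw [im_stT (hz ▸ hη), hz]
  rw [inv_mul_le_iff₀ (by positivity)] at hmarkov
  linarith

end

theorem measure_eq_zero_of_frequently_closedBall_le {α : Type*} [MetricSpace α]
    [SecondCountableTopology α] [MeasurableSpace α] [BorelSpace α] [HasBesicovitchCovering α]
    {ρ ν : Measure α} [SFinite ρ] [IsLocallyFiniteMeasure ν] {s : Set α}
    (h : ∀ x ∈ s, ∀ ε : NNReal, ε ≠ 0 →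
      ∃ᶠ r in 𝓝[>] 0, ρ (Metric.closedBall x r) ≤ ε * ν (Metric.closedBall x r)) :
    ρ s = 0 := by
  refine measure_null_of_locally_null s fun x _ => ?_
  obtain ⟨t, htx, ht⟩ := ν.finiteAt_nhds x
  refine ⟨s ∩ t, inter_mem_nhdsWithin s htx, ?_⟩
  have hst : ν (s ∩ t) ≠ ⊤ := measure_ne_top_of_subset inter_subset_right ht.ne
  have hle (ε : NNReal) (hε : ε ≠ 0) : ρ (s ∩ t) ≤ ε * ν (s ∩ t) :=
    (Besicovitch.vitaliFamily ρ).measure_le_of_frequently_le (ε • ν) .rfl _ fun y hy =>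
      (Besicovitch.tendsto_filterAt ρ y).frequently (h y hy.1 ε hε)
  have hlim : Tendsto (fun ε : NNReal => (ε : ENNReal) * ν (s ∩ t)) (𝓝[>] 0) (𝓝 0) := by
    have := ENNReal.Tendsto.mul_const (b := ν (s ∩ t))
      (ENNReal.tendsto_coe.mpr (tendsto_id (x := 𝓝 (0 : NNReal)))) (.inr hst)
    simpa using this.mono_left nhdsWithin_le_nhds
  refine nonpos_iff_eq_zero.mp (ge_of_tendsto hlim ?_)
  filter_upwards [self_mem_nhdsWithin] with ε (hε : 0 < ε) using hle ε hε.ne'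

theorem measure_eq_zero_of_densityVanishesAt {ν : Measure ℝ} [IsFiniteMeasure ν] {s : Set ℝ}
    (h : ∀ x ∈ s, densityVanishesAt ν x) : ν s = 0 := by
  refine measure_eq_zero_of_frequently_closedBall_le (ν := volume) fun x hx ε hε => ?_
  have hlt := (h x hx).eventually_lt_const (NNReal.coe_pos.mpr (pos_iff_ne_zero.mpr hε))
  refine Eventually.frequently ?_
  filter_upwards [hlt, self_mem_nhdsWithin] with η hη hpos
  rw [Real.volume_closedBall, ← ENNReal.ofReal_coe_nnreal, ← ENNReal.ofReal_mul ε.coe_nonneg,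
    ← ofReal_measureReal]
  refine ENNReal.ofReal_le_ofReal ((measureReal_closedBall_le hpos).trans ?_)
  rw [mul_comm (ε : ℝ)]
  exact mul_le_mul_of_nonneg_left hη.le (by grind)

theorem tendsto_mul_stT (ν : Measure ℝ) [IsFiniteMeasure ν] (E : ℝ) :
    Tendsto (fun η : ℝ => η * stT ν (E + η * Complex.I)) (𝓝[>] 0) (𝓝 (ν.real {E} * Complex.I)) := by
  have hlim : (ν.real {E} * Complex.I : ℂ) =
      ∫ x, ({E} : Set ℝ).indicator (fun _ => Complex.I) x ∂ν := by
    rw [integral_indicator_const _ (measurableSet_singleton E), Complex.real_smul]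
  simp_rw [hlim, stT, ← integral_const_mul]
  refine tendsto_integral_filter_of_dominated_convergence (fun _ => 1)
    (.of_forall fun η => Measurable.aestronglyMeasurable (by fun_prop)) ?_ (integrable_const _) ?_
  · filter_upwards [self_mem_nhdsWithin] with η (hη : 0 < η)
    refine ae_of_all _ fun x => ?_
    have hle := norm_inv_ofReal_sub_le (mem_UHP_ofReal_add_mul_I (E := E) hη) x
    rw [norm_mul, Complex.norm_of_nonneg hη.le]
    calc η * _ ≤ η * η⁻¹ := by gcongr; simpa using hle
      _ = 1 := mul_inv_cancel₀ hη.ne'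
  · refine ae_of_all _ fun x => ?_
    rcases eq_or_ne x E with rfl | hx
    · refine tendsto_const_nhds.congr' ?_
      filter_upwards [self_mem_nhdsWithin] with η (hη : 0 < η)
      have : (η : ℂ) ≠ 0 := by exact_mod_cast hη.ne'
      simp [mul_left_comm, this]
    · have hinv := (tendsto_const_nhds (x := (x : ℂ))).sub (tendsto_ofReal_add_mul_I E) |>.inv₀
        (sub_ne_zero.mpr (Complex.ofReal_injective.ne hx))
      simpa [hx] using tendsto_ofReal_nhdsGT_zero.mul hinv

/-! ### The transform off the support -/

theorem integral_lt_integral_of_ae_lt {α : Type*} [MeasurableSpace α] {μ : Measure α} [NeZero μ]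
    {f g : α → ℝ} (hf : Integrable f μ) (hg : Integrable g μ) (h : ∀ᵐ x ∂μ, f x < g x) :
    ∫ x, f x ∂μ < ∫ x, g x ∂μ := by
  have hle : f ≤ᵐ[μ] g := h.mono fun _ => le_of_lt
  refine (integral_mono_ae hf hg hle).lt_of_ne fun heq => ?_
  obtain ⟨x, hlt, hx⟩ := (h.and ((integral_eq_iff_of_ae_le hf hg hle).mp heq)).exists
  exact hlt.ne hx

section
variable {ν : Measure ℝ} {E E' : ℝ}

theorem msupp_eq_support (ν : Measure ℝ) : msupp ν = ν.support :=
  Set.ext fun x => (nhds_basis_Ioo_pos x).mem_measureSupport.symm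

theorem isClosed_msupp (ν : Measure ℝ) : IsClosed (msupp ν) :=
  msupp_eq_support ν ▸ Measure.isClosed_support

theorem mem_msupp_of_measure_singleton_pos (h : 0 < ν {E}) : E ∈ msupp ν := fun _ hε =>
  h.trans_le (measure_mono (singleton_subset_iff.mpr (by simpa using hε)))

theorem nonempty_msupp_inter {s : Set ℝ} (h : ν s ≠ 0) : (msupp ν ∩ s).Nonempty := by
  rw [msupp_eq_support, inter_comm]
  exact Measure.nonempty_inter_support_of_pos (pos_iff_ne_zero.mpr h)

theorem exists_forall_ae_le_abs_sub (hE : E ∉ msupp ν) : ∃ ε > 0, ∀ᵐ x ∂ν, ε ≤ |x - E| := by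
  simp only [msupp, mem_ofPred_eq, not_forall, not_lt, nonpos_iff_eq_zero] at hE
  obtain ⟨ε, hε, hE⟩ := hE
  refine ⟨ε, hε, (measure_eq_zero_iff_ae_notMem.mp hE).mono fun x hx => ?_⟩
  contrapose! hx
  rw [abs_lt] at hx
  constructor <;> linarith

theorem ae_ne_of_notMem_msupp (hE : E ∉ msupp ν) : ∀ᵐ x ∂ν, x ≠ E := by
  obtain ⟨ε, hε, h⟩ := exists_forall_ae_le_abs_sub hE
  filter_upwards [h] with x hx
  exact sub_ne_zero.mp (abs_pos.mp (hε.trans_le hx))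

theorem ae_inv_sub_lt_inv_sub (hE : E ∉ msupp ν) (hE' : E' ∉ msupp ν) (hlt : E < E')
    (h : ν (Ioo E E') = 0) : ∀ᵐ x ∂ν, (x - E)⁻¹ < (x - E')⁻¹ := by
  filter_upwards [ae_ne_of_notMem_msupp hE, ae_ne_of_notMem_msupp hE',
    measure_eq_zero_iff_ae_notMem.mp h] with x hx hx' hgap
  rcases lt_or_gt_of_ne hx with hxE | hxE
  · exact (inv_lt_inv_of_neg (by linarith) (by linarith)).mpr (by linarith)
  · have hxE' : E' < x := (not_lt.mp fun h => hgap ⟨hxE, h⟩).lt_of_ne' hx'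
    exact (inv_lt_inv₀ (by linarith) (by linarith)).mpr (by linarith)

variable [IsFiniteMeasure ν]

theorem integrable_inv_sub (hE : E ∉ msupp ν) : Integrable (fun x : ℝ => (x - E)⁻¹) ν := by
  obtain ⟨ε, hε, h⟩ := exists_forall_ae_le_abs_sub hE
  refine .of_bound (Measurable.aestronglyMeasurable (by fun_prop)) ε⁻¹ (h.mono fun x hx => ?_)
  rw [norm_inv, Real.norm_eq_abs]
  exact inv_anti₀ hε hx

theorem isBigO_stT_sub_stTR (hE : E ∉ msupp ν) :
    (fun η : ℝ => stT ν (E + η * Complex.I) - stTR ν E) =O[𝓝[>] 0] Complex.ofReal := by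
  obtain ⟨ε, hε, h⟩ := exists_forall_ae_le_abs_sub hE
  refine .of_bound (ε⁻¹ * ε⁻¹ * ν.real univ) ?_
  filter_upwards [self_mem_nhdsWithin] with η (hη : 0 < η)
  set z : ℂ := E + η * Complex.I
  have hz : 0 < z.im := mem_UHP_ofReal_add_mul_I hη
  have hbound : ∀ᵐ x : ℝ ∂ν, ‖((x : ℂ) - z)⁻¹ - ((x - E)⁻¹ : ℝ)‖ ≤ ε⁻¹ * ε⁻¹ * η := by
    filter_upwards [h] with x hx
    have hxE : ((x - E : ℝ) : ℂ) ≠ 0 :=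
      Complex.ofReal_ne_zero.mpr (abs_pos.mp (hε.trans_le hx))
    have hxz : |x - E| ≤ ‖(x : ℂ) - z‖ := by
      simpa [z] using Complex.abs_re_le_norm ((x : ℂ) - z)
    have hnum : ((x - E : ℝ) : ℂ) - (x - z) = η * Complex.I := by simp [z]
    rw [Complex.ofReal_inv, inv_sub_inv (ofReal_sub_ne_zero hz x) hxE, hnum, div_eq_inv_mul,
      norm_mul, norm_inv, norm_mul, norm_mul, mul_inv, Complex.norm_I, mul_one, Complex.norm_real,
      Complex.norm_real, Real.norm_eq_abs, Real.norm_of_nonneg hη.le]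
    gcongr
    exact hx.trans hxz
  have hsub : stT ν z - stTR ν E = ∫ x : ℝ, (((x : ℂ) - z)⁻¹ - ((x - E)⁻¹ : ℝ)) ∂ν := by
    rw [stT, stTR, ← integral_complex_ofReal]
    exact (integral_sub (integrable_inv_ofReal_sub ν hz) (integrable_inv_sub hE).ofReal).symm
  rw [Complex.norm_of_nonneg hη.le, hsub]
  exact (norm_integral_le_of_norm_le_const hbound).trans_eq (by ring)

theorem tendsto_stT_stTR (hE : E ∉ msupp ν) :
    Tendsto (fun η : ℝ => stT ν (E + η * Complex.I)) (𝓝[>] 0) (𝓝 (stTR ν E)) :=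
  tendsto_sub_nhds_zero_iff.mp
    ((isBigO_stT_sub_stTR hE).trans_tendsto tendsto_ofReal_nhdsGT_zero)

theorem stTR_le_stTR (hE : E ∉ msupp ν) (hE' : E' ∉ msupp ν) (hlt : E < E')
    (h : ν (Ioo E E') = 0) : stTR ν E ≤ stTR ν E' :=
  integral_mono_ae (integrable_inv_sub hE) (integrable_inv_sub hE')
    ((ae_inv_sub_lt_inv_sub hE hE' hlt h).mono fun _ => le_of_lt)

variable [NeZero ν]

theorem stTR_lt_stTR (hE : E ∉ msupp ν) (hE' : E' ∉ msupp ν) (hlt : E < E')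
    (h : ν (Ioo E E') = 0) : stTR ν E < stTR ν E' :=
  integral_lt_integral_of_ae_lt (integrable_inv_sub hE) (integrable_inv_sub hE')
    (ae_inv_sub_lt_inv_sub hE hE' hlt h)

theorem stTR_pos (hE : E ∉ msupp ν) (h : ν (Iio E) = 0) : 0 < stTR ν E := by
  rw [← integral_zero ℝ ℝ (μ := ν)]
  refine integral_lt_integral_of_ae_lt (integrable_zero ..) (integrable_inv_sub hE) ?_
  filter_upwards [ae_ne_of_notMem_msupp hE, measure_eq_zero_iff_ae_notMem.mp h] with x hx hge
  exact inv_pos.mpr (sub_pos.mpr ((not_lt.mp hge).lt_of_ne' hx))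

theorem stTR_neg (hE : E ∉ msupp ν) (h : ν (Ioi E) = 0) : stTR ν E < 0 := by
  rw [← integral_zero ℝ ℝ (μ := ν)]
  refine integral_lt_integral_of_ae_lt (integrable_inv_sub hE) (integrable_zero ..) ?_
  filter_upwards [ae_ne_of_notMem_msupp hE, measure_eq_zero_iff_ae_notMem.mp h] with x hx hle
  exact inv_lt_zero.mpr (sub_neg.mpr ((not_lt.mp hle).lt_of_ne hx))

theorem stT_ne_zero {z : ℂ} (hz : z ∈ UHP) : stT ν z ≠ 0 := by
  have hpos : 0 < Ifun ν z := by
    rw [← integral_zero ℝ ℝ (μ := ν)]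
    exact integral_lt_integral_of_ae_lt (integrable_zero ..) (integrable_normSq_inv hz) <|
      ae_of_all _ fun x => inv_pos.mpr (Complex.normSq_pos.mpr (ofReal_sub_ne_zero hz x))
  intro h
  have him := im_stT (ν := ν) hz
  rw [h, Complex.zero_im] at him
  exact (mul_pos hz hpos).ne him

end

/-! ### Atoms and support of the representing measure -/

/-- The zeros of the Cauchy–Stieltjes transform of `μ` on the real line, off the support of `μ`
(on the support, a vanishing `stTR μ E` may be a junk value). -/
def stTZeros (μ : Measure ℝ) : Set ℝ := {E | E ∉ msupp μ ∧ stTR μ E = 0}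

theorem tendsto_im_zero_of_tendsto_ofReal {α : Type*} {l : Filter α} {f : α → ℂ} {r : ℝ}
    (h : Tendsto f l (𝓝 r)) : Tendsto (fun a => (f a).im) l (𝓝 0) :=
  (Complex.continuous_im.tendsto' (r : ℂ) 0 (Complex.ofReal_im r)).comp h

theorem tendsto_inv_stT_zero {μ : Measure ℝ} [IsFiniteMeasure μ] {E : ℝ} (hE : 0 < μ {E}) :
    Tendsto (fun η : ℝ => (stT μ (E + η * Complex.I))⁻¹) (𝓝[>] 0) (𝓝 0) := by
  have hmass : (μ.real {E} : ℂ) * Complex.I ≠ 0 := mul_ne_zero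
    (Complex.ofReal_ne_zero.mpr (ENNReal.toReal_pos hE.ne' (measure_ne_top _ _)).ne')
    Complex.I_ne_zero
  have hlim := tendsto_ofReal_nhdsGT_zero.mul ((tendsto_mul_stT μ E).inv₀ hmass)
  rw [zero_mul] at hlim
  refine hlim.congr' ?_
  filter_upwards [self_mem_nhdsWithin] with η (hη : 0 < η)
  rw [mul_inv, mul_inv_cancel_left₀ (Complex.ofReal_ne_zero.mpr hη.ne')]

namespace IsNevanHat

variable {μ ν τ : Measure ℝ} {E : ℝ}

theorem inv_stT (h : IsNevanHat μ ν) {z : ℂ} (hz : z ∈ UHP) :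
    (stT μ z)⁻¹ = (∫ x, x ∂μ : ℝ) - z - stT ν z := by
  have := h.2 z hz
  rw [nrT, ← stT] at this
  linear_combination -this

theorem densityVanishesAt_of_tendsto_inv (h : IsNevanHat μ ν) {r : ℝ}
    (hr : Tendsto (fun η : ℝ => (stT μ (E + η * Complex.I))⁻¹) (𝓝[>] 0) (𝓝 r)) :
    densityVanishesAt ν E := by
  refine tendsto_im_zero_of_tendsto_ofReal (r := (∫ x, x ∂μ) - E - r) ?_
  push_cast
  refine ((tendsto_const_nhds.sub (tendsto_ofReal_add_mul_I E)).sub hr).congr' ?_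
  filter_upwards [self_mem_nhdsWithin] with η (hη : 0 < η)
  rw [h.inv_stT (mem_UHP_ofReal_add_mul_I hη), sub_sub_cancel]

theorem densityVanishesAt_of_tendsto (h : IsNevanHat μ ν) {r : ℝ}
    (hr : Tendsto (fun η : ℝ => stT ν (E + η * Complex.I)) (𝓝[>] 0) (𝓝 r))
    (hne : E + r ≠ ∫ x, x ∂μ) : densityVanishesAt μ E := by
  have hlim := (tendsto_const_nhds (x := ((∫ x, x ∂μ : ℝ) : ℂ))).sub
    (tendsto_ofReal_add_mul_I E) |>.sub hr |>.inv₀ (by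
      rw [sub_sub, sub_ne_zero]
      exact_mod_cast hne.symm)
  refine tendsto_im_zero_of_tendsto_ofReal (r := ((∫ x, x ∂μ) - E - r)⁻¹) ?_
  push_cast
  refine hlim.congr' ?_
  filter_upwards [self_mem_nhdsWithin] with η (hη : 0 < η)
  rw [← h.inv_stT (mem_UHP_ofReal_add_mul_I hη), inv_inv]

theorem densityVanishesAt_of_measure_singleton_pos [IsFiniteMeasure μ] (h : IsNevanHat μ ν)
    (hE : 0 < μ {E}) : densityVanishesAt ν E :=
  h.densityVanishesAt_of_tendsto_inv (r := 0) (by simpa using tendsto_inv_stT_zero hE)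

theorem densityVanishesAt_of_stTR_ne_zero [IsFiniteMeasure μ] (h : IsNevanHat μ ν)
    (hE : E ∉ msupp μ) (hne : stTR μ E ≠ 0) : densityVanishesAt ν E := by
  refine h.densityVanishesAt_of_tendsto_inv (r := (stTR μ E)⁻¹) ?_
  rw [Complex.ofReal_inv]
  exact (tendsto_stT_stTR hE).inv₀ (Complex.ofReal_ne_zero.mpr hne)

theorem measure_singleton_pos [IsFiniteMeasure μ] [NeZero μ] (h : IsNevanHat μ ν)
    (hE : E ∈ stTZeros μ) : 0 < ν {E} := by
  have := h.1
  -- If `ν {E} = 0` then `η * (stT μ)⁻¹ → 0`, contradicting `stT μ = O(η)` near a zero of `stT μ`.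
  refine pos_iff_ne_zero.mpr fun hatom => ?_
  set g : ℝ → ℂ := fun η => (stT μ (E + η * Complex.I))⁻¹
  have hg : Tendsto (fun η : ℝ => η * g η) (𝓝[>] 0) (𝓝 0) := by
    have hm := tendsto_ofReal_nhdsGT_zero.mul
      ((tendsto_const_nhds (x := ((∫ x, x ∂μ : ℝ) : ℂ))).sub (tendsto_ofReal_add_mul_I E))
    have hlim := hm.sub (tendsto_mul_stT ν E)
    simp only [zero_mul, measureReal_def, hatom, ENNReal.toReal_zero, Complex.ofReal_zero,
      sub_zero] at hlim
    refine hlim.congr' ?_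
    filter_upwards [self_mem_nhdsWithin] with η (hη : 0 < η)
    rw [← mul_sub, ← h.inv_stT (mem_UHP_ofReal_add_mul_I hη)]
  have hO := (isBigO_stT_sub_stTR hE.1).mul (Asymptotics.isBigO_refl g _)
  simp only [hE.2, Complex.ofReal_zero, sub_zero] at hO
  refine zero_ne_one (tendsto_nhds_unique (hO.trans_tendsto hg) (tendsto_const_nhds.congr' ?_))
  filter_upwards [self_mem_nhdsWithin] with η (hη : 0 < η)
  exact (mul_inv_cancel₀ (stT_ne_zero (mem_UHP_ofReal_add_mul_I hη))).symm

theorem msupp_subset (h : IsNevanHat μ ν) [NullSingletonClass τ] (hτ : τ ≤ μ) [IsFiniteMeasure μ] :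
    msupp τ ⊆ msupp ν := by
  have := h.1
  intro E hE ε hε
  refine pos_iff_ne_zero.mpr fun hnull => (hE ε hε).ne' ?_
  set U := Ioo (E - ε) (E + ε)
  have hU : ∀ x ∈ U, x ∉ msupp ν := fun x hx => by
    rw [msupp_eq_support, Measure.notMem_support_iff_exists]
    exact ⟨U, isOpen_Ioo.mem_nhds hx, hnull⟩
  have hmono : StrictMonoOn (fun x => x + stTR ν x) U := fun x hx y hy hlt =>
    add_lt_add_of_lt_of_le hlt (stTR_le_stTR (hU x hx) (hU y hy) hlt
      (measure_mono_null (Ioo_subset_Ioo hx.1.le hy.2.le) hnull))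
  set pole := {x ∈ U | x + stTR ν x = ∫ x, x ∂μ}
  have hpole : τ pole = 0 := Set.Subsingleton.measure_zero
    (fun x hx y hy => hmono.injOn hx.1 hy.1 (hx.2.trans hy.2.symm)) τ
  have hrest : μ (U \ pole) = 0 := measure_eq_zero_of_densityVanishesAt fun x hx =>
    h.densityVanishesAt_of_tendsto (tendsto_stT_stTR (hU x hx.1)) fun hx' => hx.2 ⟨hx.1, hx'⟩
  exact measure_mono_null (subset_sdiff_union U pole)
    (measure_union_null (le_antisymm ((hτ _).trans hrest.le) bot_le) hpole)

theorem msupp_eq_union [IsFiniteMeasure μ] [NeZero μ] [NullSingletonClass τ] (h : IsNevanHat μ ν)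
    (hτ : τ ≤ μ) (hμ : msupp μ ⊆ msupp τ ∪ {x | 0 < μ {x}}) (hfin : (stTZeros μ).Finite) :
    msupp ν = msupp τ ∪ stTZeros μ := by
  have := h.1
  refine Subset.antisymm ?_ (union_subset (h.msupp_subset hτ) fun E hE =>
    mem_msupp_of_measure_singleton_pos (h.measure_singleton_pos hE))
  rw [msupp_eq_support ν]
  refine Measure.support_subset_of_isClosed ((isClosed_msupp τ).union hfin.isClosed) ?_
  refine measure_eq_zero_of_densityVanishesAt fun E hE => ?_
  rw [mem_compl_iff, mem_union, not_or] at hE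
  by_cases hEμ : E ∈ msupp μ
  · exact h.densityVanishesAt_of_measure_singleton_pos ((hμ hEμ).resolve_left hE.1)
  · exact h.densityVanishesAt_of_stTR_ne_zero hEμ fun h0 => hE.2 ⟨hEμ, h0⟩

end IsNevanHat

theorem finite_and_ncard_le_of_ordConnected_separated {α ι : Type*} [LinearOrder α] [Fintype ι]
    {I : ι → Set α} (hI : ∀ i, (I i).OrdConnected) {Z : Set α} (hdisj : ∀ i, Disjoint (I i) Z)
    (hbelow : ∀ x ∈ Z, ∃ i, (I i ∩ Iio x).Nonempty)
    (habove : ∀ x ∈ Z, ∃ i, (I i ∩ Ioi x).Nonempty)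
    (hbetween : ∀ x ∈ Z, ∀ y ∈ Z, x < y → ∃ i, (I i ∩ Ioo x y).Nonempty) :
    Z.Finite ∧ Z.ncard ≤ Fintype.card ι - 1 := by
  classical
  let B : α → Finset ι := fun x => {i | (I i ∩ Iio x).Nonempty}
  have hB {x p : α} {i : ι} (hx : x ∈ Z) (hp : p ∈ I i) (hlt : x < p) : i ∉ B x := fun hi => by
    obtain ⟨q, hq, hqx⟩ := (Finset.mem_filter.mp hi).2
    exact (hdisj i).le_bot ⟨(hI i).out hq hp ⟨le_of_lt hqx, hlt.le⟩, hx⟩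
  have hmono : StrictMonoOn (fun x => (B x).card) Z := fun x hx y hy hlt => by
    obtain ⟨i, p, hp, hxp, hpy⟩ := hbetween x hx y hy hlt
    refine Finset.card_lt_card (Finset.ssubset_iff_of_subset ?_ |>.mpr
      ⟨i, Finset.mem_filter.mpr ⟨Finset.mem_univ i, p, hp, hpy⟩, hB hx hp hxp⟩)
    exact Finset.monotone_filter_right _ fun j _ hj =>
      hj.mono (inter_subset_inter_right _ (Iio_subset_Iio hlt.le))
  have hmaps : MapsTo (fun x => (B x).card) Z (Finset.Icc 1 (Fintype.card ι - 1)) := fun x hx => by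
    obtain ⟨i, p, hp, hpx⟩ := hbelow x hx
    obtain ⟨j, q, hq, hxq⟩ := habove x hx
    have hpos : 0 < (B x).card :=
      Finset.card_pos.mpr ⟨i, Finset.mem_filter.mpr ⟨Finset.mem_univ i, p, hp, hpx⟩⟩
    have hlt := Finset.card_lt_univ_of_notMem (hB hx hq hxq)
    exact Finset.mem_coe.mpr (Finset.mem_Icc.mpr ⟨hpos, Nat.le_sub_one_of_lt hlt⟩)
  refine ⟨.of_injOn hmaps hmono.injOn (Finset.finite_toSet _), ?_⟩
  simpa [ncard_coe_finset] using
    ncard_le_ncard_of_injOn _ hmaps hmono.injOn (Finset.finite_toSet _)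

theorem stTZeros_finite_and_ncard_le {μ : Measure ℝ} [IsFiniteMeasure μ] [NeZero μ] {ι : Type*}
    [Finite ι] {I : ι → Set ℝ} (hI : ∀ i, (I i).OrdConnected) (hμ : msupp μ = ⋃ i, I i) :
    (stTZeros μ).Finite ∧ (stTZeros μ).ncard ≤ Nat.card ι - 1 := by
  have := Fintype.ofFinite ι
  have hmeets {s : Set ℝ} (hs : μ s ≠ 0) : ∃ i, (I i ∩ s).Nonempty := by
    rw [← nonempty_iUnion, ← iUnion_inter, ← hμ]
    exact nonempty_msupp_inter hs
  rw [Nat.card_eq_fintype_card]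
  refine finite_and_ncard_le_of_ordConnected_separated hI
    (fun i => disjoint_left.mpr fun x hx hZ => hZ.1 (hμ ▸ mem_iUnion_of_mem i hx))
    (fun E hE => hmeets fun h => (stTR_pos hE.1 h).ne' hE.2)
    (fun E hE => hmeets fun h => (stTR_neg hE.1 h).ne hE.2)
    (fun E hE E' hE' hlt => hmeets fun h => ?_)
  simpa [hE.2, hE'.2] using stTR_lt_stTR hE.1 hE'.1 hlt h

theorem msupp_mono {μ τ : Measure ℝ} (h : τ ≤ μ) : msupp τ ⊆ msupp μ := fun _ hx ε hε =>
  (hx ε hε).trans_le (h _)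

theorem exists_forall_ae_abs_le {μ : Measure ℝ} (h : IsCompact (msupp μ)) :
    ∃ R, ∀ᵐ x ∂μ, |x| ≤ R := by
  obtain ⟨R, hR⟩ := h.isBounded.exists_norm_le
  rw [msupp_eq_support] at hR
  exact ⟨R, mem_of_superset Measure.support_mem_ae hR⟩

theorem nevanlinna_representation_general {ι κ : Type*} [Finite ι] [Finite κ] {μ τ : Measure ℝ}
    [IsProbabilityMeasure μ] [NullSingletonClass τ] {I : ι → Set ℝ} {a : κ → ℝ}
    (hcomp : IsCompact (msupp μ)) (hτ : τ ≤ μ) (hne : (msupp τ).Nonempty)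
    (hI : ∀ i, (I i).OrdConnected) (hsupp : msupp τ = ⋃ i, I i) (ha : ∀ k, 0 < μ {a k})
    (hμ : msupp μ ⊆ msupp τ ∪ range a) :
    ∃ μhat : Measure ℝ, IsFiniteMeasure μhat ∧
      (∀ z ∈ UHP,
        nrT μ z - z = -((∫ x, x ∂μ : ℝ) : ℂ) + ∫ x, ((x : ℂ) - z)⁻¹ ∂μhat) ∧
      0 < μhat univ ∧
      (μhat univ).toReal = (∫ x, x ^ 2 ∂μ) - (∫ x, x ∂μ) ^ 2 ∧
      ∃ (j : ℕ) (y : Fin j → ℝ), j ≤ Nat.card ι + Nat.card κ - 1 ∧ Function.Injective y ∧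
        (∀ i, stTR μ (y i) = 0 ∧ y i ∉ msupp τ) ∧
        (∀ i, 0 < μhat {y i}) ∧
        msupp μhat = msupp τ ∪ range y := by
  obtain ⟨R, hR⟩ := exists_forall_ae_abs_le hcomp
  obtain ⟨ν, hν, hmass⟩ := exists_isNevanHat hR
  have hvar : ProbabilityTheory.variance id μ = (∫ x, x ^ 2 ∂μ) - (∫ x, x ∂μ) ^ 2 :=
    ProbabilityTheory.variance_eq_sub
      ((memLp_top_of_bound aestronglyMeasurable_id R hR).mono_exponent le_top)
  have hpieces : msupp μ = ⋃ i, Sum.elim I (fun k => {a k}) i := by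
    rw [iUnion_sum]
    simp only [Sum.elim_inl, Sum.elim_inr, ← hsupp, iUnion_singleton_eq_range]
    exact hμ.antisymm (union_subset (msupp_mono hτ)
      (range_subset_iff.mpr fun k => mem_msupp_of_measure_singleton_pos (ha k)))
  obtain ⟨hfin, hcard⟩ := stTZeros_finite_and_ncard_le
    (Sum.rec hI fun _ => ordConnected_singleton) hpieces
  rw [Nat.card_sum] at hcard
  have hνsupp := hν.msupp_eq_union hτ
    (hμ.trans (union_subset_union_right _ (range_subset_iff.mpr ha))) hfin
  obtain ⟨j, y, hy, hrange⟩ := hfin.fin_param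
  rw [← hrange] at hcard hνsupp
  have hyZ (i) : y i ∈ stTZeros μ := hrange ▸ mem_range_self i
  have hpos : 0 < ν univ := by
    obtain ⟨E, hE⟩ := hne
    exact (hν.msupp_subset hτ hE 1 one_pos).trans_le (measure_mono (subset_univ _))
  exact ⟨ν, hν.1, hν.2, hpos, hmass.trans hvar, j, y,
    by rwa [← Nat.card_coe_set_eq, Nat.card_range_of_injective hy, Nat.card_fin] at hcard, hy,
    fun i => ⟨(hyZ i).2, fun h => (hyZ i).1 (msupp_mono hτ h)⟩,
    fun i => hν.measure_singleton_pos (hyZ i), hνsupp⟩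

section
variable {μ : Measure ℝ}

theorem acPart_le (μ : Measure ℝ) : acPart μ ≤ μ :=
  Measure.withDensity_rnDeriv_le μ volume

instance : NullSingletonClass (acPart μ) :=
  nullSingletonClass_withDensity _

namespace Assumption1

variable {nac npp nppout : ℕ} {Em Ep : Fin nac → ℝ} {atom : Fin npp → ℝ} {ρ : ℝ → ℝ}

theorem nonempty_msupp_acPart (hμ : Assumption1 μ nac npp nppout Em Ep atom ρ) :
    (msupp (acPart μ)).Nonempty := by
  rw [hμ.supp_ac]
  exact nonempty_iUnion.mpr ⟨⟨0, hμ.nac_pos⟩, nonempty_Icc.mpr (hμ.lt _).le⟩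

theorem msupp_subset (hμ : Assumption1 μ nac npp nppout Em Ep atom ρ) :
    msupp μ ⊆ msupp (acPart μ) ∪
      range fun k : {j : Fin npp // atom j ∉ msupp (acPart μ)} => atom k := by
  have := hμ.prob
  set A := range fun k : {j : Fin npp // atom j ∉ msupp (acPart μ)} => atom k
  have hclosed : IsClosed (msupp (acPart μ) ∪ A) :=
    (isClosed_msupp _).union (finite_range _).isClosed
  rw [msupp_eq_support μ]
  refine Measure.support_subset_of_isClosed hclosed ?_
  have hac : acPart μ (msupp (acPart μ) ∪ A)ᶜ = 0 :=
    measure_mono_null (compl_subset_compl.mpr subset_union_left)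
      (msupp_eq_support (acPart μ) ▸ Measure.measure_compl_support)
  have hsing : μ.singularPart volume (msupp (acPart μ) ∪ A)ᶜ = 0 := by
    rw [hμ.sing_atomic, Measure.finsetSum_apply]
    refine Finset.sum_eq_zero fun j _ => ?_
    have hj : atom j ∈ msupp (acPart μ) ∪ A :=
      (em _).imp_right fun hj => ⟨⟨j, hj⟩, rfl⟩
    rw [Measure.smul_apply, Measure.dirac_apply' _ hclosed.measurableSet.compl,
      indicator_of_notMem (notMem_compl_iff.mpr hj), smul_zero]
  have hdec := congr($(μ.haveLebesgueDecomposition_add volume) (msupp (acPart μ) ∪ A)ᶜ)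
  rw [Measure.add_apply, hsing, zero_add] at hdec
  exact hdec.trans hac

end Assumption1

end

/-- Nevanlinna representation of `F_μ − id` under Assumption 1. -/
theorem nevanlinna_representation
    (μ : Measure ℝ) (nac npp nppout : ℕ)
    (Em Ep : Fin nac → ℝ) (atom : Fin npp → ℝ) (ρ : ℝ → ℝ)
    (hμ : Assumption1 μ nac npp nppout Em Ep atom ρ) :
    ∃ μhat : Measure ℝ, IsFiniteMeasure μhat ∧
      (∀ z ∈ UHP,
        nrT μ z - z = -((∫ x, x ∂μ : ℝ) : ℂ) + ∫ x, ((x : ℂ) - z)⁻¹ ∂μhat) ∧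
      0 < μhat Set.univ ∧
      (μhat Set.univ).toReal = (∫ x, x ^ 2 ∂μ) - (∫ x, x ∂μ) ^ 2 ∧
      ∃ (j : ℕ) (y : Fin j → ℝ), j ≤ nac + nppout - 1 ∧ Function.Injective y ∧
        (∀ i, stTR μ (y i) = 0 ∧ y i ∉ msupp (acPart μ)) ∧
        (∀ i, 0 < μhat {y i}) ∧
        msupp μhat = msupp (acPart μ) ∪ Set.range y := by
  have := hμ.prob
  simpa only [Nat.card_fin, hμ.out_card] using nevanlinna_representation_general hμ.compact
    (acPart_le μ) hμ.nonempty_msupp_acPart (fun _ => ordConnected_Icc) hμ.supp_ac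
    (fun _ => hμ.atom_pos _) hμ.msupp_subset
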